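/- arXiv:2105.11845 — 13 statements merged into one kernel-verified Lean document; each statement's English description precedes it below -/
import Mathlib

section
/- A point x ∈ ℝⁿ is critical for F = (f_1,…,f_m) if and only if at least one of the following holds: (i) ∇f_i(x) = 0 for some i ∈ {1,…,m}, or (ii) the set S(x) = {V ∈ ℝⁿ : ⟨∇f_i(x), V⟩ ≤ −‖∇f_i(x)‖ for all i = 1,…,m} is empty. -/
open RealInnerProductSpace

/-- A point `x` is critical for `F = (f_1, …, f_m)` iff some gradient vanishes at `x`
or the set `S(x) = {V | ⟪∇f_i(x), V⟫ ≤ -‖∇f_i(x)‖ ∀ i}` is empty. -/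
theorem critical_iff_grad_zero_or_S_empty (n m : ℕ)
    (f : Fin m → EuclideanSpace ℝ (Fin n) → ℝ)
    (hf : ∀ i, Differentiable ℝ (f i))
    (x : EuclideanSpace ℝ (Fin n)) :
    (¬ ∃ v : EuclideanSpace ℝ (Fin n), ∀ i, ⟪gradient (f i) x, v⟫ < 0) ↔
      ((∃ i, gradient (f i) x = 0) ∨
        {V : EuclideanSpace ℝ (Fin n) |
          ∀ i, ⟪gradient (f i) x, V⟫ ≤ -‖gradient (f i) x‖} = ∅) := by
  constructor
  · intro h
    by_cases h0 : ∃ i, gradient (f i) x = 0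
    · exact Or.inl h0
    · right
      rw [Set.eq_empty_iff_forall_notMem]
      intro V hV
      refine h ⟨V, fun i => ?_⟩
      have hpos : 0 < ‖gradient (f i) x‖ := norm_pos_iff.mpr fun hi => h0 ⟨i, hi⟩
      have hi := hV i
      linarith
  · rintro h ⟨v, hv⟩
    rcases h with ⟨i, hi⟩ | h
    · have h1 := hv i
      rw [hi, inner_zero_left] at h1
      exact lt_irrefl _ h1
    · have hmem : (∑ j, ‖gradient (f j) x‖ / (-⟪gradient (f j) x, v⟫)) • v ∈
          {V : EuclideanSpace ℝ (Fin n) |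
            ∀ i, ⟪gradient (f i) x, V⟫ ≤ -‖gradient (f i) x‖} := by
        intro i
        have hi : 0 < -⟪gradient (f i) x, v⟫ := neg_pos.mpr (hv i)
        have hle : ‖gradient (f i) x‖ / (-⟪gradient (f i) x, v⟫) ≤
            ∑ j, ‖gradient (f j) x‖ / (-⟪gradient (f j) x, v⟫) :=
          Finset.single_le_sum
            (f := fun j => ‖gradient (f j) x‖ / (-⟪gradient (f j) x, v⟫))
            (fun j _ => div_nonneg (norm_nonneg _) (neg_pos.mpr (hv j)).le)
            (Finset.mem_univ i)
        rw [div_le_iff₀ hi] at hle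
        rw [real_inner_smul_right]
        linarith
      rw [h] at hmem
      exact hmem
end

section
/- Let g_1,…,g_m ∈ ℝⁿ be nonzero vectors and let S = {v ∈ ℝⁿ : ⟨g_i, v⟩ ≤ −‖g_i‖ for all i = 1,…,m}. If for some R > 0 the intersection of the closed ball {v : ‖v‖ ≤ R} with S is empty, then there exists ε > 0 such that for every collection of vectors ĝ_1,…,ĝ_m ∈ ℝⁿ with ‖ĝ_i − g_i‖ ≤ ε for all i = 1,…,m, the intersection of {v : ‖v‖ ≤ R} with {v ∈ ℝⁿ : ⟨ĝ_i, v⟩ ≤ −‖ĝ_i‖ for all i = 1,…,m} is also empty. -/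
open RealInnerProductSpace

/-- Lemma (lower semicontinuity, part 1): if the closed ball of radius `R` misses
`S = {v | ⟪g_i, v⟫ ≤ -‖g_i‖ ∀ i}`, then the same holds for every sufficiently small
perturbation of the vectors `g_i`. -/
theorem ball_inter_S_empty_stable (n m : ℕ)
    (g : Fin m → EuclideanSpace ℝ (Fin n)) (hg : ∀ i, g i ≠ 0)
    (R : ℝ) (hR : 0 < R)
    (h : {v : EuclideanSpace ℝ (Fin n) | ‖v‖ ≤ R} ∩
        {v : EuclideanSpace ℝ (Fin n) | ∀ i, ⟪g i, v⟫ ≤ -‖g i‖} = ∅) :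
    ∃ ε > 0, ∀ gh : Fin m → EuclideanSpace ℝ (Fin n),
      (∀ i, ‖gh i - g i‖ ≤ ε) →
      {v : EuclideanSpace ℝ (Fin n) | ‖v‖ ≤ R} ∩
        {v : EuclideanSpace ℝ (Fin n) | ∀ i, ⟪gh i, v⟫ ≤ -‖gh i‖} = ∅ := by
  have key : ∀ᶠ gh in nhds g, ∀ v ∈ Metric.closedBall (0 : EuclideanSpace ℝ (Fin n)) R,
      ∃ i, -‖gh i‖ < ⟪gh i, v⟫ := by
    apply IsCompact.eventually_forall_of_forall_eventually (isCompact_closedBall _ _)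
    intro v hv
    have hv' : ‖v‖ ≤ R := by simpa using hv
    have hne : ∃ i, -‖g i‖ < ⟪g i, v⟫ := by
      by_contra! hc
      have : v ∈ (∅ : Set (EuclideanSpace ℝ (Fin n))) := h ▸ ⟨hv', hc⟩
      exact this
    obtain ⟨i, hi⟩ := hne
    have hopen : IsOpen {z : (Fin m → EuclideanSpace ℝ (Fin n)) × EuclideanSpace ℝ (Fin n) |
        -‖z.1 i‖ < ⟪z.1 i, z.2⟫} := isOpen_lt (by fun_prop) (by fun_prop)
    filter_upwards [hopen.mem_nhds (show (g, v) ∈ _ from hi)] with z hz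
    exact ⟨i, hz⟩
  obtain ⟨ε, hε, H⟩ := Metric.nhds_basis_closedBall.eventually_iff.mp key
  refine ⟨ε, hε, fun gh hgh => ?_⟩
  have hmem : gh ∈ Metric.closedBall g ε := by
    rw [Metric.mem_closedBall, dist_pi_le_iff hε.le]
    intro i
    rw [dist_eq_norm]
    exact hgh i
  rw [Set.eq_empty_iff_forall_notMem]
  rintro v ⟨hv, hS⟩
  obtain ⟨i, hi⟩ := H hmem v (by simpa using hv)
  exact absurd (hS i) (not_le.mpr hi)
end

section
/- Let f_1,…,f_m : ℝⁿ → ℝ be differentiable with L-Lipschitz gradients, and let (x_k) be a sequence of points converging to x_∞ ∈ ℝⁿ such that for every k the set S(x_k) is nonempty (so V_c(x_k) exists). If x_∞ is critical and ∇f_i(x_∞) ≠ 0 for all i = 1,…,m, then ‖V_c(x_k)‖ → ∞ as k → ∞. -/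
open RealInnerProductSpace Filter Topology

/-- The feasible set defining the central descent direction at a point, given the
gradients `g i` at that point. -/
def centralFeasible {n m : ℕ} (g : Fin m → EuclideanSpace ℝ (Fin n)) :
    Set (EuclideanSpace ℝ (Fin n)) :=
  {V | ∀ i, ⟪g i, V⟫ ≤ -‖g i‖}

/-- If `x_k → x_∞`, each `S(x_k)` is nonempty with minimum-norm element `V_c(x_k)`,
and `x_∞` is critical with all gradients nonzero at `x_∞`, then `‖V_c(x_k)‖ → ∞`. -/
theorem norm_central_descent_tendsto_atTop_of_critical_limit (n m : ℕ)
    (f : Fin m → EuclideanSpace ℝ (Fin n) → ℝ) (L : ℝ) (hL : 0 ≤ L)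
    (hdiff : ∀ i, Differentiable ℝ (f i))
    (hlip : ∀ i, ∀ x y : EuclideanSpace ℝ (Fin n),
      ‖gradient (f i) x - gradient (f i) y‖ ≤ L * ‖x - y‖)
    (x : ℕ → EuclideanSpace ℝ (Fin n)) (xinf : EuclideanSpace ℝ (Fin n))
    (hconv : Tendsto x atTop (𝓝 xinf))
    (Vc : ℕ → EuclideanSpace ℝ (Fin n))
    (hVc : ∀ k, Vc k ∈ centralFeasible (fun i => gradient (f i) (x k)) ∧
      ∀ w ∈ centralFeasible (fun i => gradient (f i) (x k)), ‖Vc k‖ ≤ ‖w‖)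
    (hcrit : ¬ ∃ v : EuclideanSpace ℝ (Fin n), ∀ i, ⟪gradient (f i) xinf, v⟫ < 0)
    (hnz : ∀ i, gradient (f i) xinf ≠ 0) :
    Tendsto (fun k => ‖Vc k‖) atTop atTop := by
  rw [tendsto_atTop]
  intro M
  have hd : Tendsto (fun k => L * ‖x k - xinf‖ * (1 + |M|)) atTop (𝓝 0) := by
    have h1 : Tendsto (fun k => ‖x k - xinf‖) atTop (𝓝 0) :=
      tendsto_iff_norm_sub_tendsto_zero.mp hconv
    simpa using (h1.const_mul L).mul_const (1 + |M|)
  have hev : ∀ᶠ k in atTop, ∀ i,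
      L * ‖x k - xinf‖ * (1 + |M|) < ‖gradient (f i) xinf‖ := by
    rw [eventually_all]
    intro i
    exact hd.eventually_lt_const (norm_pos_iff.mpr (hnz i))
  filter_upwards [hev] with k hk
  by_contra hlt
  push Not at hlt
  apply hcrit
  refine ⟨Vc k, fun i => ?_⟩
  have hV : ⟪gradient (f i) (x k), Vc k⟫ ≤ -‖gradient (f i) (x k)‖ := (hVc k).1 i
  have hki := hk i
  have hδ := hlip i (x k) xinf
  have hδ0 : 0 ≤ L * ‖x k - xinf‖ := mul_nonneg hL (norm_nonneg _)
  have hM : ‖Vc k‖ ≤ |M| := hlt.le.trans (le_abs_self M)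
  have h1 : -(‖gradient (f i) (x k) - gradient (f i) xinf‖ * ‖Vc k‖)
      ≤ ⟪gradient (f i) (x k) - gradient (f i) xinf, Vc k⟫ :=
    (abs_le.mp (abs_real_inner_le_norm _ _)).1
  rw [inner_sub_left] at h1
  have h2 : ‖gradient (f i) (x k) - gradient (f i) xinf‖ * ‖Vc k‖
      ≤ L * ‖x k - xinf‖ * |M| := mul_le_mul hδ hM (norm_nonneg _) hδ0
  have h3 : ‖gradient (f i) xinf‖ - ‖gradient (f i) (x k)‖
      ≤ ‖gradient (f i) (x k) - gradient (f i) xinf‖ := by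
    rw [norm_sub_rev]
    exact norm_sub_norm_le _ _
  linarith
end

section
/- Let f_1,…,f_m : ℝⁿ → ℝ be differentiable with L-Lipschitz gradients, and let (x_k) be a sequence of points converging to x_∞ ∈ ℝⁿ. If x_∞ is not critical (so that all ∇f_i(x_∞) ≠ 0 and S(x_∞) is nonempty), then for all sufficiently large k the set S(x_k) is nonempty, and the central descent directions converge: V_c(x_k) → V_c(x_∞) as k → ∞. -/
open RealInnerProductSpace Filter Topology

lemma cd_eventually_feasible {n m : ℕ} (g : ℕ → Fin m → EuclideanSpace ℝ (Fin n))
    (G : Fin m → EuclideanSpace ℝ (Fin n))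
    (hg : ∀ i, Tendsto (fun k => g k i) atTop (𝓝 (G i)))
    (w : EuclideanSpace ℝ (Fin n)) (hw : ∀ i, ⟪G i, w⟫ < -‖G i‖) :
    ∀ᶠ k in atTop, w ∈ centralFeasible (g k) := by
  have h : ∀ i, ∀ᶠ k in atTop, ⟪g k i, w⟫ < -‖g k i‖ := fun i =>
    ((hg i).inner tendsto_const_nhds).eventually_lt ((hg i).norm.neg) (hw i)
  filter_upwards [eventually_all.2 h] with k hk i
  exact (hk i).le

lemma cd_unique {n m : ℕ} (G : Fin m → EuclideanSpace ℝ (Fin n))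
    (V Z : EuclideanSpace ℝ (Fin n)) (hV : V ∈ centralFeasible G)
    (hmin : ∀ w ∈ centralFeasible G, ‖V‖ ≤ ‖w‖)
    (hZ : Z ∈ centralFeasible G) (hZV : ‖Z‖ ≤ ‖V‖) : Z = V := by
  have hmid : (1 / 2 : ℝ) • (Z + V) ∈ centralFeasible G := by
    intro i
    have h1 := hV i
    have h2 := hZ i
    rw [inner_smul_right, inner_add_right]
    linarith
  have h := hmin _ hmid
  rw [norm_smul] at h
  norm_num at h
  have hp := parallelogram_law_with_norm ℝ Z V
  have h0 := norm_nonneg V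
  have h1 := norm_nonneg Z
  have h2 := norm_nonneg (Z - V)
  have : ‖Z - V‖ = 0 := by nlinarith
  exact sub_eq_zero.1 (norm_eq_zero.1 this)

lemma cd_main {n m : ℕ} (g : ℕ → Fin m → EuclideanSpace ℝ (Fin n))
    (G : Fin m → EuclideanSpace ℝ (Fin n))
    (hg : ∀ i, Tendsto (fun k => g k i) atTop (𝓝 (G i)))
    (v : EuclideanSpace ℝ (Fin n)) (hv : ∀ i, ⟪G i, v⟫ < 0)
    (Vc : ℕ → EuclideanSpace ℝ (Fin n)) (V : EuclideanSpace ℝ (Fin n))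
    (hV : V ∈ centralFeasible G) (hmin : ∀ w ∈ centralFeasible G, ‖V‖ ≤ ‖w‖)
    (hc : ∀ k, (centralFeasible (g k)).Nonempty →
      Vc k ∈ centralFeasible (g k) ∧ ∀ w ∈ centralFeasible (g k), ‖Vc k‖ ≤ ‖w‖) :
    Tendsto Vc atTop (𝓝 V) := by
  have key : ∀ t : ℝ, 0 < t →
      ∀ᶠ k in atTop, Vc k ∈ centralFeasible (g k) ∧ ‖Vc k‖ ≤ ‖V + t • v‖ := by
    intro t ht
    have : ∀ i, ⟪G i, V + t • v⟫ < -‖G i‖ := by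
      intro i
      have h1 := hV i
      have h2 := mul_neg_of_pos_of_neg ht (hv i)
      rw [inner_add_right, inner_smul_right]
      linarith
    filter_upwards [cd_eventually_feasible g G hg _ this] with k hk
    exact ⟨(hc k ⟨_, hk⟩).1, (hc k ⟨_, hk⟩).2 _ hk⟩
  apply tendsto_of_subseq_tendsto
  intro ns hns
  have hb : ∀ᶠ k in atTop, Vc (ns k) ∈ Metric.closedBall 0 ‖V + (1 : ℝ) • v‖ := by
    filter_upwards [hns.eventually (key 1 one_pos)] with k hk
    simpa using hk.2
  obtain ⟨Z, -, φ, hφ, hZ⟩ :=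
    (isCompact_closedBall (0 : EuclideanSpace ℝ (Fin n)) ‖V + (1 : ℝ) • v‖).tendsto_subseq'
      hb.frequently
  refine ⟨φ, ?_⟩
  have hsub : Tendsto (fun k => ns (φ k)) atTop atTop := hns.comp hφ.tendsto_atTop
  have hZ' : Tendsto (fun k => Vc (ns (φ k))) atTop (𝓝 Z) := hZ
  have hZf : Z ∈ centralFeasible G := by
    intro i
    have hgi := (hg i).comp hsub
    refine le_of_tendsto_of_tendsto (hgi.inner hZ') hgi.norm.neg ?_
    filter_upwards [hsub.eventually (key 1 one_pos)] with k hk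
    exact hk.1 i
  have hZt : ∀ t : ℝ, 0 < t → ‖Z‖ ≤ ‖V + t • v‖ := by
    intro t ht
    refine le_of_tendsto hZ'.norm ?_
    filter_upwards [hsub.eventually (key t ht)] with k hk
    exact hk.2
  have hZV : ‖Z‖ ≤ ‖V‖ := by
    have hcont : Continuous (fun t : ℝ => ‖V + t • v‖) := by fun_prop
    have hl : Tendsto (fun t : ℝ => ‖V + t • v‖) (𝓝[>] 0) (𝓝 ‖V‖) := by
      have := (hcont.tendsto 0).mono_left (nhdsWithin_le_nhds (s := Set.Ioi 0))
      simpa using this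
    refine ge_of_tendsto hl ?_
    filter_upwards [self_mem_nhdsWithin] with t ht
    exact hZt t ht
  rw [← cd_unique G V Z hV hmin hZf hZV]
  exact hZ'

/-- If `x_k → x_∞` and `x_∞` is not critical, then eventually `S(x_k)` is nonempty and
the central descent directions `V_c(x_k)` converge to `V_c(x_∞)`. -/
theorem central_descent_tendsto_of_noncritical_limit (n m : ℕ)
    (f : Fin m → EuclideanSpace ℝ (Fin n) → ℝ) (L : ℝ) (hL : 0 ≤ L)
    (hdiff : ∀ i, Differentiable ℝ (f i))
    (hlip : ∀ i, ∀ x y : EuclideanSpace ℝ (Fin n),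
      ‖gradient (f i) x - gradient (f i) y‖ ≤ L * ‖x - y‖)
    (x : ℕ → EuclideanSpace ℝ (Fin n)) (xinf : EuclideanSpace ℝ (Fin n))
    (hconv : Tendsto x atTop (𝓝 xinf))
    (hncrit : ∃ v : EuclideanSpace ℝ (Fin n), ∀ i, ⟪gradient (f i) xinf, v⟫ < 0) :
    (∃ K : ℕ, ∀ k ≥ K,
      (centralFeasible (fun i => gradient (f i) (x k))).Nonempty) ∧
    ∀ (Vc : ℕ → EuclideanSpace ℝ (Fin n)) (Vcinf : EuclideanSpace ℝ (Fin n)),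
      (Vcinf ∈ centralFeasible (fun i => gradient (f i) xinf) ∧
        ∀ w ∈ centralFeasible (fun i => gradient (f i) xinf), ‖Vcinf‖ ≤ ‖w‖) →
      (∀ k, (centralFeasible (fun i => gradient (f i) (x k))).Nonempty →
        Vc k ∈ centralFeasible (fun i => gradient (f i) (x k)) ∧
          ∀ w ∈ centralFeasible (fun i => gradient (f i) (x k)), ‖Vc k‖ ≤ ‖w‖) →
      Tendsto Vc atTop (𝓝 Vcinf) := by
  obtain ⟨v, hv⟩ := hncrit
  have hg : ∀ i, Tendsto (fun k => gradient (f i) (x k)) atTop (𝓝 (gradient (f i) xinf)) := by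
    intro i
    rw [tendsto_iff_norm_sub_tendsto_zero]
    have h := (tendsto_iff_norm_sub_tendsto_zero.1 hconv).const_mul L
    rw [mul_zero] at h
    exact squeeze_zero (fun _ => norm_nonneg _) (fun k => hlip i _ _) h
  refine ⟨?_, ?_⟩
  · have hcs : ∀ i, ∀ᶠ c : ℝ in atTop,
        ⟪gradient (f i) xinf, c • v⟫ < -‖gradient (f i) xinf‖ := by
      intro i
      have h : Tendsto (fun c : ℝ => c * ⟪gradient (f i) xinf, v⟫) atTop atBot :=
        tendsto_id.atTop_mul_const_of_neg (hv i)
      filter_upwards [h.eventually_lt_atBot (-‖gradient (f i) xinf‖)] with c hc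
      rwa [inner_smul_right]
    obtain ⟨c, hc⟩ := (eventually_all.2 hcs).exists
    obtain ⟨K, hK⟩ := eventually_atTop.1
      (cd_eventually_feasible (fun k i => gradient (f i) (x k)) _ hg (c • v) hc)
    exact ⟨K, fun k hk => ⟨_, hK k hk⟩⟩
  · intro Vc Vcinf hV hc
    exact cd_main (fun k i => gradient (f i) (x k)) _ hg v hv Vc Vcinf hV.1 hV.2 hc
end

section
/- Let g_1,…,g_m ∈ ℝⁿ be nonzero vectors such that S = {V ∈ ℝⁿ : ⟨g_i, V⟩ ≤ −‖g_i‖ for all i = 1,…,m} is nonempty, and let V_c be the minimum-norm element of S (so V_c ≠ 0). Then the unit vector V_c/‖V_c‖ is maximally distant from the non-descent directions: for every u ∈ ℝⁿ with ‖u‖ = 1 and ⟨g_i, u⟩ ≤ 0 for all i, one has min_{i=1,…,m} (−⟨g_i, u⟩)/‖g_i‖ ≤ min_{i=1,…,m} (−⟨g_i, V_c⟩)/(‖g_i‖·‖V_c‖); equivalently, the distance of u to ℝⁿ \ {v : ⟨g_i, v⟩ ≤ 0 ∀i} is at most the distance of V_c/‖V_c‖ to that set. -/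
open RealInnerProductSpace

/-- The normalized central descent direction `V_c/‖V_c‖` is maximally distant from the
non-descent directions: any unit descent vector `u` has a smaller value of
`min_i (-⟪g_i, ·⟫)/‖g_i‖`. -/
theorem central_descent_maximally_distant (n m : ℕ) (hm : 0 < m)
    (g : Fin m → EuclideanSpace ℝ (Fin n)) (hg : ∀ i, g i ≠ 0)
    (Vc : EuclideanSpace ℝ (Fin n))
    (hVc_mem : ∀ i, ⟪g i, Vc⟫ ≤ -‖g i‖)
    (hVc_min : ∀ w : EuclideanSpace ℝ (Fin n),
      (∀ i, ⟪g i, w⟫ ≤ -‖g i‖) → ‖Vc‖ ≤ ‖w‖)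
    (u : EuclideanSpace ℝ (Fin n)) (hu : ‖u‖ = 1)
    (hud : ∀ i, ⟪g i, u⟫ ≤ 0) :
    Finset.univ.inf' ⟨⟨0, hm⟩, Finset.mem_univ _⟩
        (fun i => -⟪g i, u⟫ / ‖g i‖) ≤
      Finset.univ.inf' ⟨⟨0, hm⟩, Finset.mem_univ _⟩
        (fun i => -⟪g i, Vc⟫ / (‖g i‖ * ‖Vc‖)) := by
  set δ := Finset.univ.inf' ⟨⟨0, hm⟩, Finset.mem_univ _⟩
        (fun i => -⟪g i, u⟫ / ‖g i‖) with hδ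
  have hgp : ∀ i, 0 < ‖g i‖ := fun i => norm_pos_iff.mpr (hg i)
  have hV : 0 < ‖Vc‖ := by
    rw [norm_pos_iff]
    rintro rfl
    have h1 := hVc_mem ⟨0, hm⟩
    have h2 := hgp ⟨0, hm⟩
    rw [inner_zero_right] at h1
    linarith
  have hle : ∀ i, δ * ‖g i‖ ≤ -⟪g i, u⟫ := fun i => by
    rw [← le_div_iff₀ (hgp i)]
    exact Finset.inf'_le (fun i => -⟪g i, u⟫ / ‖g i‖) (Finset.mem_univ i)
  have key : δ * ‖Vc‖ ≤ 1 := by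
    rcases le_or_gt δ 0 with h | h
    · nlinarith
    · have h3 := hVc_min (δ⁻¹ • u) (fun i => by
        rw [inner_smul_right, inv_mul_le_iff₀ h]
        have := hle i
        linarith)
      rw [norm_smul, hu, mul_one, Real.norm_of_nonneg (inv_nonneg.mpr h.le)] at h3
      calc δ * ‖Vc‖ ≤ δ * δ⁻¹ := by gcongr
        _ = 1 := mul_inv_cancel₀ h.ne'
  refine Finset.le_inf' _ _ (fun i _ => ?_)
  rw [le_div_iff₀ (mul_pos (hgp i) hV)]
  have h4 := hVc_mem i
  have h5 := mul_le_mul_of_nonneg_right key (hgp i).le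
  linarith
end

section
/- Let f_1,…,f_m : ℝⁿ → ℝ be differentiable at x ∈ ℝⁿ and let h_1,…,h_m : ℝ → ℝ be differentiable with h_i'(f_i(x)) > 0 for each i. Then the constraint sets defining the central descent direction coincide: {V ∈ ℝⁿ : ⟨∇(h_i ∘ f_i)(x), V⟩ ≤ −‖∇(h_i ∘ f_i)(x)‖ for all i} = {V ∈ ℝⁿ : ⟨∇f_i(x), V⟩ ≤ −‖∇f_i(x)‖ for all i}; consequently the central descent direction of (h_1 ∘ f_1, …, h_m ∘ f_m) at x equals the central descent direction of (f_1, …, f_m) at x. -/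
open RealInnerProductSpace

/-- Invariance of the central descent direction under strictly increasing differentiable
reparametrizations of the objectives: the constraint sets coincide, and consequently the
minimum-norm elements (central descent directions) coincide. -/
theorem central_descent_invariant_monotone_transform (n m : ℕ)
    (f : Fin m → EuclideanSpace ℝ (Fin n) → ℝ)
    (x : EuclideanSpace ℝ (Fin n))
    (hf : ∀ i, DifferentiableAt ℝ (f i) x)
    (h : Fin m → ℝ → ℝ)
    (hh : ∀ i, Differentiable ℝ (h i))
    (hh' : ∀ i, 0 < deriv (h i) (f i x)) :
    {V : EuclideanSpace ℝ (Fin n) |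
        ∀ i, ⟪gradient (h i ∘ f i) x, V⟫ ≤ -‖gradient (h i ∘ f i) x‖} =
      {V : EuclideanSpace ℝ (Fin n) |
        ∀ i, ⟪gradient (f i) x, V⟫ ≤ -‖gradient (f i) x‖} ∧
    ∀ Vc : EuclideanSpace ℝ (Fin n),
      ((∀ i, ⟪gradient (h i ∘ f i) x, Vc⟫ ≤ -‖gradient (h i ∘ f i) x‖) ∧
        ∀ w : EuclideanSpace ℝ (Fin n),
          (∀ i, ⟪gradient (h i ∘ f i) x, w⟫ ≤ -‖gradient (h i ∘ f i) x‖) → ‖Vc‖ ≤ ‖w‖) ↔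
      ((∀ i, ⟪gradient (f i) x, Vc⟫ ≤ -‖gradient (f i) x‖) ∧
        ∀ w : EuclideanSpace ℝ (Fin n),
          (∀ i, ⟪gradient (f i) x, w⟫ ≤ -‖gradient (f i) x‖) → ‖Vc‖ ≤ ‖w‖) := by
  have hg : ∀ i, gradient (h i ∘ f i) x = deriv (h i) (f i x) • gradient (f i) x := by
    intro i
    have h1 : HasFDerivAt (h i ∘ f i) (deriv (h i) (f i x) • fderiv ℝ (f i) x) x :=
      ((hh i) (f i x)).hasDerivAt.comp_hasFDerivAt x (hf i).hasFDerivAt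
    unfold gradient
    rw [h1.fderiv]
    simp
  have key : ∀ V : EuclideanSpace ℝ (Fin n),
      (∀ i, ⟪gradient (h i ∘ f i) x, V⟫ ≤ -‖gradient (h i ∘ f i) x‖) ↔
        (∀ i, ⟪gradient (f i) x, V⟫ ≤ -‖gradient (f i) x‖) := by
    intro V
    refine forall_congr' fun i => ?_
    rw [hg i, real_inner_smul_left, norm_smul, Real.norm_of_nonneg (hh' i).le, ← mul_neg]
    exact mul_le_mul_iff_right₀ (hh' i)
  refine ⟨Set.ext key, fun Vc => ?_⟩
  simp only [key]
end

section
/- Let f_1,…,f_m : ℝⁿ → ℝ be differentiable with L-Lipschitz gradients. Let (x_k) ⊂ ℝⁿ, positive step sizes (α_k), indices τ(i,k) with k − m ≤ τ(i,k) ≤ k, stale gradients ĝ_{i,k} = ∇f_i(x_{τ(i,k)}) all nonzero, and nonzero vectors V̂_k satisfying ⟨ĝ_{i,k}, V̂_k⟩ ≤ −‖ĝ_{i,k}‖ for all i (hence ‖V̂_k‖ ≥ 1), with x_{k+1} = x_k + α_k·V̂_k/‖V̂_k‖ for all k. If there is c₁ > 0 with ‖∇f_i(x_k)‖ ≥ c₁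 for all i and k, then for every k ≥ m + 1 and every i = 1,…,m: f_i(x_{k+1}) − f_i(x_k) ≤ α_k·( 2L·Σ_{j=k−m}^{k} α_j + (L/2)·α_k − c₁/‖V̂_k‖ ). -/
open RealInnerProductSpace Filter Topology

theorem descent_aux {n : ℕ} (f : EuclideanSpace ℝ (Fin n) → ℝ) (L : ℝ)
    (hdiff : Differentiable ℝ f)
    (hlip : ∀ x y : EuclideanSpace ℝ (Fin n),
      ‖gradient f x - gradient f y‖ ≤ L * ‖x - y‖)
    (x d : EuclideanSpace ℝ (Fin n)) :
    f (x + d) - f x ≤ ⟪gradient f x, d⟫ + L / 2 * ‖d‖ ^ 2 := by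
  have hder : ∀ t : ℝ, HasDerivAt
      (fun t : ℝ => f (x + t • d) - t * ⟪gradient f x, d⟫ - L / 2 * ‖d‖ ^ 2 * t ^ 2)
      (⟪gradient f (x + t • d), d⟫ - ⟪gradient f x, d⟫ - L / 2 * ‖d‖ ^ 2 * (2 * t)) t := by
    intro t
    have h1 : HasDerivAt (fun t : ℝ => x + t • d) d t := by
      simpa using ((hasDerivAt_id t).smul_const d).const_add x
    have h3 : HasDerivAt (fun t : ℝ => f (x + t • d)) ⟪gradient f (x + t • d), d⟫ t := by
      have e : ⟪gradient f (x + t • d), d⟫ = fderiv ℝ f (x + t • d) d := by simp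
      rw [e]
      exact (hdiff (x + t • d)).hasFDerivAt.comp_hasDerivAt t h1
    have h4 : HasDerivAt (fun t : ℝ => t * ⟪gradient f x, d⟫) ⟪gradient f x, d⟫ t := by
      simpa using (hasDerivAt_id t).mul_const ⟪gradient f x, d⟫
    have h5 : HasDerivAt (fun t : ℝ => L / 2 * ‖d‖ ^ 2 * t ^ 2)
        (L / 2 * ‖d‖ ^ 2 * (2 * t)) t := by
      simpa using (hasDerivAt_pow 2 t).const_mul (L / 2 * ‖d‖ ^ 2)
    exact (h3.sub h4).sub h5
  have hanti := antitoneOn_of_deriv_nonpos (convex_Icc (0 : ℝ) 1)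
    (fun t _ => (hder t).continuousAt.continuousWithinAt)
    (fun t _ => (hder t).differentiableAt.differentiableWithinAt)
    (fun t ht => by
      rw [interior_Icc] at ht
      rw [(hder t).deriv, ← inner_sub_left]
      have h1 := real_inner_le_norm (gradient f (x + t • d) - gradient f x) d
      have h2 := hlip (x + t • d) x
      rw [add_sub_cancel_left, norm_smul, Real.norm_of_nonneg ht.1.le] at h2
      nlinarith [mul_le_mul_of_nonneg_right h2 (norm_nonneg d)])
  have := hanti (Set.left_mem_Icc.2 zero_le_one) (Set.right_mem_Icc.2 zero_le_one) zero_le_one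
  simp only [one_smul, zero_smul, add_zero, one_mul, zero_mul, one_pow, mul_one, sub_zero,
    ne_eq, OfNat.ofNat_ne_zero, not_false_eq_true, zero_pow, mul_zero] at this
  linarith


/-- Per-iteration decrease estimate for the incremental central descent method with stale
gradients: if all gradients stay bounded below in norm by `c₁ > 0`, then for `k ≥ m + 1`,
`f_i(x_{k+1}) - f_i(x_k) ≤ α_k (2L Σ_{j=k-m}^{k} α_j + (L/2) α_k - c₁/‖V̂_k‖)`. -/
theorem incremental_decrease_bound (n m : ℕ)
    (f : Fin m → EuclideanSpace ℝ (Fin n) → ℝ)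
    (L : ℝ) (hL : 0 ≤ L)
    (hdiff : ∀ i, Differentiable ℝ (f i))
    (hlip : ∀ i, ∀ x y : EuclideanSpace ℝ (Fin n),
      ‖gradient (f i) x - gradient (f i) y‖ ≤ L * ‖x - y‖)
    (x : ℕ → EuclideanSpace ℝ (Fin n))
    (α : ℕ → ℝ) (hα : ∀ k, 0 < α k)
    (τ : Fin m → ℕ → ℕ)
    (hτ : ∀ i k, k - m ≤ τ i k ∧ τ i k ≤ k)
    (hgnz : ∀ i k, gradient (f i) (x (τ i k)) ≠ 0)
    (V : ℕ → EuclideanSpace ℝ (Fin n)) (hVnz : ∀ k, V k ≠ 0)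
    (hfeas : ∀ i k, ⟪gradient (f i) (x (τ i k)), V k⟫ ≤ -‖gradient (f i) (x (τ i k))‖)
    (hupd : ∀ k, x (k + 1) = x k + α k • ‖V k‖⁻¹ • V k)
    (c₁ : ℝ) (hc₁ : 0 < c₁)
    (hgrad : ∀ i k, c₁ ≤ ‖gradient (f i) (x k)‖) :
    ∀ k, m + 1 ≤ k → ∀ i,
      f i (x (k + 1)) - f i (x k) ≤
        α k * (2 * L * (∑ j ∈ Finset.Icc (k - m) k, α j) + L / 2 * α k - c₁ / ‖V k‖) := by
  intro k _ i
  have hV : 0 < ‖V k‖ := norm_pos_iff.2 (hVnz k)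
  have hu : ∀ k, ‖‖V k‖⁻¹ • V k‖ = 1 := fun k => by
    rw [norm_smul, norm_inv, norm_norm, inv_mul_cancel₀ (norm_ne_zero_iff.2 (hVnz k))]
  have hpath : ∀ a b, a ≤ b → ‖x b - x a‖ ≤ ∑ j ∈ Finset.Ico a b, α j := by
    intro a b hab
    induction b, hab using Nat.le_induction with
    | base => simp
    | succ b hab ih =>
      rw [Finset.sum_Ico_succ_top hab, hupd b, add_sub_right_comm]
      refine (norm_add_le _ _).trans (add_le_add ih ?_)
      rw [norm_smul, hu, Real.norm_of_nonneg (hα b).le, mul_one]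
  have hS : ‖x k - x (τ i k)‖ ≤ ∑ j ∈ Finset.Icc (k - m) k, α j := by
    refine (hpath _ _ (hτ i k).2).trans
      (Finset.sum_le_sum_of_subset_of_nonneg ?_ (fun j _ _ => (hα j).le))
    intro j hj
    have := (hτ i k).1
    simp only [Finset.mem_Ico, Finset.mem_Icc] at hj ⊢
    omega
  have hS0 := (norm_nonneg _).trans hS
  have hD := descent_aux (f i) L (hdiff i) (hlip i) (x k) (α k • ‖V k‖⁻¹ • V k)
  rw [← hupd k, inner_smul_right, norm_smul, hu, Real.norm_of_nonneg (hα k).le, mul_one] at hD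
  have h1 : ⟪gradient (f i) (x k), ‖V k‖⁻¹ • V k⟫
      ≤ L * (∑ j ∈ Finset.Icc (k - m) k, α j) - c₁ / ‖V k‖ := by
    have e : ⟪gradient (f i) (x k), ‖V k‖⁻¹ • V k⟫
        = ⟪gradient (f i) (x k) - gradient (f i) (x (τ i k)), ‖V k‖⁻¹ • V k⟫
          + ‖V k‖⁻¹ * ⟪gradient (f i) (x (τ i k)), V k⟫ := by
      rw [inner_sub_left, inner_smul_right (gradient (f i) (x (τ i k)))]
      ring
    have a1 := real_inner_le_norm (gradient (f i) (x k) - gradient (f i) (x (τ i k)))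
      (‖V k‖⁻¹ • V k)
    rw [hu, mul_one] at a1
    have a2 := (hlip i (x k) (x (τ i k))).trans (mul_le_mul_of_nonneg_left hS hL)
    have a3 : ‖V k‖⁻¹ * ⟪gradient (f i) (x (τ i k)), V k⟫ ≤ ‖V k‖⁻¹ * (-c₁) :=
      mul_le_mul_of_nonneg_left
        ((hfeas i k).trans (neg_le_neg (hgrad i (τ i k)))) (inv_nonneg.2 hV.le)
    have a4 : ‖V k‖⁻¹ * (-c₁) = - (c₁ / ‖V k‖) := by ring
    linarith
  have h2 := mul_le_mul_of_nonneg_left h1 (hα k).le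
  have h3 := mul_nonneg (hα k).le (mul_nonneg hL hS0)
  nlinarith
end

section
/- Let f_1,…,f_m : ℝⁿ → ℝ be differentiable with L-Lipschitz gradients. Let (x_k) ⊂ ℝⁿ, positive step sizes (α_k) with α_k → 0, indices τ(i,k) with k − m ≤ τ(i,k) ≤ k, stale gradients ĝ_{i,k} = ∇f_i(x_{τ(i,k)}) all nonzero, and nonzero vectors V̂_k satisfying ⟨ĝ_{i,k}, V̂_k⟩ ≤ −‖ĝ_{i,k}‖ for all i, with x_{k+1} = x_k + α_k·V̂_k/‖V̂_k‖ for all k. Suppose there are constants c₁ > 0 and c₂ > 0 such that ‖∇f_i(x_k)‖ ≥ c₁ for all i and k, and ‖V̂_k‖ ≤ c₂ for all k. Then there exists k̄ ∈ ℕ such that for all k ≥ k̄ and all i = 1,…,m: f_i(x_{k+1}) − f_i(x_k) ≤ −(α_k·c₁)/(2c₂). -/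
open RealInnerProductSpace Filter Topology

/-- Eventual uniform decrease for the incremental central descent method: if the step
sizes vanish, gradient norms are bounded below by `c₁ > 0`, and the directions `V̂_k` are
bounded by `c₂`, then eventually `f_i(x_{k+1}) - f_i(x_k) ≤ -(α_k c₁)/(2 c₂)` for all `i`. -/
theorem incremental_eventual_decrease (n m : ℕ)
    (f : Fin m → EuclideanSpace ℝ (Fin n) → ℝ)
    (L : ℝ) (hL : 0 ≤ L)
    (hdiff : ∀ i, Differentiable ℝ (f i))
    (hlip : ∀ i, ∀ x y : EuclideanSpace ℝ (Fin n),
      ‖gradient (f i) x - gradient (f i) y‖ ≤ L * ‖x - y‖)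
    (x : ℕ → EuclideanSpace ℝ (Fin n))
    (α : ℕ → ℝ) (hα : ∀ k, 0 < α k)
    (hα0 : Tendsto α atTop (𝓝 0))
    (τ : Fin m → ℕ → ℕ)
    (hτ : ∀ i k, k - m ≤ τ i k ∧ τ i k ≤ k)
    (hgnz : ∀ i k, gradient (f i) (x (τ i k)) ≠ 0)
    (V : ℕ → EuclideanSpace ℝ (Fin n)) (hVnz : ∀ k, V k ≠ 0)
    (hfeas : ∀ i k, ⟪gradient (f i) (x (τ i k)), V k⟫ ≤ -‖gradient (f i) (x (τ i k))‖)
    (hupd : ∀ k, x (k + 1) = x k + α k • ‖V k‖⁻¹ • V k)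
    (c₁ : ℝ) (hc₁ : 0 < c₁)
    (hgrad : ∀ i k, c₁ ≤ ‖gradient (f i) (x k)‖)
    (c₂ : ℝ) (hc₂ : 0 < c₂)
    (hVbd : ∀ k, ‖V k‖ ≤ c₂) :
    ∃ kbar : ℕ, ∀ k ≥ kbar, ∀ i,
      f i (x (k + 1)) - f i (x k) ≤ -(α k * c₁) / (2 * c₂) := by
  have hm : (0 : ℝ) ≤ m := Nat.cast_nonneg m
  have hD : 0 < L * (m + 1) + 1 := by positivity
  obtain ⟨ε, hε⟩ : ∃ ε : ℝ, ε = c₁ / (2 * c₂) / (L * (m + 1) + 1) := ⟨_, rfl⟩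
  have hε0 : 0 < ε := by rw [hε]; positivity
  have hεL : L * ((m + 1) * ε) ≤ c₁ / (2 * c₂) := by
    have h : ε * (L * (m + 1) + 1) = c₁ / (2 * c₂) := by
      rw [hε]; field_simp
    nlinarith
  obtain ⟨N, hN⟩ := eventually_atTop.1 (hα0.eventually_le_const hε0)
  have hstep : ∀ k, ‖x (k + 1) - x k‖ = α k := by
    intro k
    have h0 : ‖V k‖ ≠ 0 := norm_ne_zero_iff.2 (hVnz k)
    rw [hupd k, add_sub_cancel_left, norm_smul, norm_smul, norm_inv, norm_norm,
      inv_mul_cancel₀ h0, mul_one, Real.norm_of_nonneg (hα k).le]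
  have hdist : ∀ t, N ≤ t → ∀ d : ℕ, ‖x (t + d) - x t‖ ≤ d * ε := by
    intro t ht d
    induction d with
    | zero => simp
    | succ d ih =>
      have h1 := norm_sub_le_norm_sub_add_norm_sub (x (t + d + 1)) (x (t + d)) (x t)
      have h2 := hstep (t + d)
      have h3 := hN (t + d) (by omega)
      rw [← add_assoc]
      push_cast
      linarith
  refine ⟨N + m, fun k hk i => ?_⟩
  obtain ⟨hτ1, hτ2⟩ := hτ i k
  obtain ⟨z, hz, hfz⟩ := domain_mvt (f := f i) (s := Set.univ) (x := x k) (y := x (k + 1))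
    (f' := fun y => fderiv ℝ (f i) y)
    (fun y _ => ((hdiff i) y).hasFDerivAt.hasFDerivWithinAt) convex_univ
    (Set.mem_univ _) (Set.mem_univ _)
  have hgz : f i (x (k + 1)) - f i (x k) = ⟪gradient (f i) z, x (k + 1) - x k⟫ := by
    rw [hfz, gradient, InnerProductSpace.toDual_symm_apply]
  have hzk : ‖z - x k‖ ≤ α k := by
    rw [← hstep k]
    exact norm_sub_le_of_mem_segment hz
  have hkt : ‖x k - x (τ i k)‖ ≤ m * ε := by
    obtain ⟨d, hd⟩ := Nat.exists_eq_add_of_le hτ2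
    have h1 := hdist (τ i k) (by omega) d
    rw [← hd] at h1
    have h2 : (d : ℝ) ≤ m := by exact_mod_cast (by omega : d ≤ m)
    nlinarith
  have hαk := hα k
  have hkε := hN k (by omega)
  have hzt : ‖z - x (τ i k)‖ ≤ (m + 1) * ε := by
    have := norm_sub_le_norm_sub_add_norm_sub z (x k) (x (τ i k))
    linarith
  have hgd : ‖gradient (f i) z - gradient (f i) (x (τ i k))‖ ≤ c₁ / (2 * c₂) :=
    (hlip i _ _).trans ((mul_le_mul_of_nonneg_left hzt hL).trans hεL)
  have herr : ⟪gradient (f i) z - gradient (f i) (x (τ i k)), x (k + 1) - x k⟫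
      ≤ c₁ / (2 * c₂) * α k := by
    refine (real_inner_le_norm _ _).trans ?_
    rw [hstep k]
    exact mul_le_mul_of_nonneg_right hgd hαk.le
  have hV0 : 0 < ‖V k‖ := norm_pos_iff.2 (hVnz k)
  have hmain : ⟪gradient (f i) (x (τ i k)), x (k + 1) - x k⟫ ≤ -(c₁ / c₂ * α k) := by
    rw [hupd k, add_sub_cancel_left, inner_smul_right, inner_smul_right]
    have h1 : ⟪gradient (f i) (x (τ i k)), V k⟫ ≤ -c₁ := by
      linarith [hfeas i k, hgrad i (τ i k)]
    have h2 : c₂⁻¹ ≤ ‖V k‖⁻¹ := inv_anti₀ hV0 (hVbd k)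
    have h4 : ‖V k‖⁻¹ * ⟪gradient (f i) (x (τ i k)), V k⟫ ≤ -(c₁ / c₂) := by
      have h5 := mul_le_mul_of_nonneg_left h1 (inv_pos.2 hV0).le
      have h6 := mul_le_mul_of_nonneg_right h2 hc₁.le
      rw [div_eq_mul_inv]
      linarith
    have := mul_le_mul_of_nonneg_left h4 hαk.le
    linarith
  rw [inner_sub_left] at herr
  have e1 : c₁ / c₂ * α k = 2 * (c₁ / (2 * c₂) * α k) := by field_simp
  have e2 : -(α k * c₁) / (2 * c₂) = -(c₁ / (2 * c₂) * α k) := by field_simp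
  rw [hgz, e2]
  linarith
end

section
/- Let f_1,…,f_m : ℝⁿ → ℝ be differentiable with L-Lipschitz gradients. Let (x_k) ⊂ ℝⁿ, positive step sizes (α_k) with α_k → 0 and Σ_k α_k = ∞, indices τ(i,k) with k − m ≤ τ(i,k) ≤ k, stale gradients ĝ_{i,k} = ∇f_i(x_{τ(i,k)}) all nonzero, and nonzero vectors V̂_k satisfying ⟨ĝ_{i,k}, V̂_k⟩ ≤ −‖ĝ_{i,k}‖ for all i, with x_{k+1} = x_k + α_k·V̂_k/‖V̂_k‖ for all k. Suppose there are constants c₁ > 0 and c₂ > 0 such that ‖∇f_i(x_k)‖ ≥ c₁ for all i and k, and ‖V̂_k‖ ≤ c₂ for all k. Then f_i(x_k) → −∞ as k → ∞ for every i = 1,…,m. -/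
open RealInnerProductSpace Filter Topology

/-- Divergence of all objective values for the incremental central descent method when
the step sizes vanish but are not summable, gradient norms are bounded below by `c₁ > 0`,
and the directions `V̂_k` are bounded by `c₂`: every `f_i(x_k) → -∞`. -/
theorem incremental_tendsto_atBot (n m : ℕ)
    (f : Fin m → EuclideanSpace ℝ (Fin n) → ℝ)
    (L : ℝ) (hL : 0 ≤ L)
    (hdiff : ∀ i, Differentiable ℝ (f i))
    (hlip : ∀ i, ∀ x y : EuclideanSpace ℝ (Fin n),
      ‖gradient (f i) x - gradient (f i) y‖ ≤ L * ‖x - y‖)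
    (x : ℕ → EuclideanSpace ℝ (Fin n))
    (α : ℕ → ℝ) (hα : ∀ k, 0 < α k)
    (hα0 : Tendsto α atTop (𝓝 0))
    (hαsum : Tendsto (fun N => ∑ k ∈ Finset.range N, α k) atTop atTop)
    (τ : Fin m → ℕ → ℕ)
    (hτ : ∀ i k, k - m ≤ τ i k ∧ τ i k ≤ k)
    (hgnz : ∀ i k, gradient (f i) (x (τ i k)) ≠ 0)
    (V : ℕ → EuclideanSpace ℝ (Fin n)) (hVnz : ∀ k, V k ≠ 0)
    (hfeas : ∀ i k, ⟪gradient (f i) (x (τ i k)), V k⟫ ≤ -‖gradient (f i) (x (τ i k))‖)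
    (hupd : ∀ k, x (k + 1) = x k + α k • ‖V k‖⁻¹ • V k)
    (c₁ : ℝ) (hc₁ : 0 < c₁)
    (hgrad : ∀ i k, c₁ ≤ ‖gradient (f i) (x k)‖)
    (c₂ : ℝ) (hc₂ : 0 < c₂)
    (hVbd : ∀ k, ‖V k‖ ≤ c₂) :
    ∀ i, Tendsto (fun k => f i (x k)) atTop atBot := by
  intro i
  set g : EuclideanSpace ℝ (Fin n) → EuclideanSpace ℝ (Fin n) := fun z => gradient (f i) z with hg
  set c : ℝ := c₁ / c₂ with hc
  have hcpos : 0 < c := div_pos hc₁ hc₂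
  -- choose the tolerance
  set ε : ℝ := c / (2 * (L + 1) * (m + 1)) with hε
  have hεpos : 0 < ε := by positivity
  have hεL : L * ((m + 1) * ε) ≤ c / 2 := by
    have h1 : (L + 1) * ((m + 1) * ε) = c / 2 := by
      rw [hε]
      field_simp
    have h2 : 0 < (m + 1) * ε := by positivity
    nlinarith
  obtain ⟨K, hK⟩ := eventually_atTop.1 (hα0.eventually (ge_mem_nhds hεpos))
  have hunit : ∀ k, ‖‖V k‖⁻¹ • V k‖ = 1 := fun k => by
    rw [norm_smul, norm_inv, norm_norm]
    exact inv_mul_cancel₀ (norm_ne_zero_iff.2 (hVnz k))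
  have hstep : ∀ k, ‖x (k + 1) - x k‖ = α k := fun k => by
    rw [hupd k, add_sub_cancel_left, norm_smul, hunit, mul_one, Real.norm_of_nonneg (hα k).le]
  have hdist : ∀ d k, K ≤ k → ‖x (k + d) - x k‖ ≤ d * ε := by
    intro d k hk
    induction d with
    | zero => simp
    | succ d ih =>
      have h1 := hK (k + d) (by omega)
      have h2 : x (k + (d + 1)) - x k = (x (k + d + 1) - x (k + d)) + (x (k + d) - x k) := by
        rw [← add_assoc]; abel
      rw [h2]
      refine (norm_add_le _ _).trans ?_
      rw [hstep]
      push_cast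
      linarith
  have hdir : ∀ k, ⟪g (x (τ i k)), ‖V k‖⁻¹ • V k⟫ ≤ -c := by
    intro k
    rw [real_inner_smul_right]
    have hV : 0 < ‖V k‖ := norm_pos_iff.2 (hVnz k)
    have h1 := hfeas i k
    have h2 := hgrad i (τ i k)
    have h3 : c ≤ ‖V k‖⁻¹ * c₁ := by
      rw [hc, div_eq_inv_mul]
      gcongr
      exact hVbd k
    have h4 : ‖V k‖⁻¹ * ⟪g (x (τ i k)), V k⟫ ≤ ‖V k‖⁻¹ * (-c₁) :=
      mul_le_mul_of_nonneg_left (by simp only [hg]; linarith) (by positivity)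
    linarith
  have hdec : ∀ k, K + m ≤ k → f i (x (k + 1)) ≤ f i (x k) - c / 2 * α k := by
    intro k hk
    obtain ⟨z, hz, hmv⟩ := domain_mvt (f := f i) (s := Set.univ) (x := x k) (y := x (k + 1))
      (f' := fun z => InnerProductSpace.toDual ℝ _ (gradient (f i) z))
      (fun z _ => ((hdiff i z).hasGradientAt.hasFDerivAt).hasFDerivWithinAt)
      convex_univ trivial trivial
    have hmv' : f i (x (k + 1)) - f i (x k) = α k * ⟪g z, ‖V k‖⁻¹ • V k⟫ := by
      rw [hmv, InnerProductSpace.toDual_apply_apply, hupd k, add_sub_cancel_left,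
        real_inner_smul_right]
    have hzk : ‖z - x k‖ ≤ ε := by
      have h := norm_sub_le_of_mem_segment hz
      rw [hstep] at h
      exact h.trans (hK k (by omega))
    have hτ' := hτ i k
    have hkt : ‖x k - x (τ i k)‖ ≤ m * ε := by
      have h := hdist (k - τ i k) (τ i k) (by omega)
      rw [Nat.add_sub_cancel' hτ'.2] at h
      refine h.trans ?_
      have : k - τ i k ≤ m := by omega
      gcongr
    have hzt : ‖z - x (τ i k)‖ ≤ (m + 1) * ε := by
      have := norm_sub_le_norm_sub_add_norm_sub z (x k) (x (τ i k))
      linarith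
    have hin : ⟪g z - g (x (τ i k)), ‖V k‖⁻¹ • V k⟫ ≤ c / 2 := by
      refine (real_inner_le_norm _ _).trans ?_
      rw [hunit, mul_one]
      exact (hlip i _ _).trans ((mul_le_mul_of_nonneg_left hzt hL).trans hεL)
    rw [inner_sub_left] at hin
    have hd := hdir k
    have := mul_le_mul_of_nonneg_left
      (show ⟪g z, ‖V k‖⁻¹ • V k⟫ ≤ -(c / 2) by linarith) (hα k).le
    linarith
  set S : ℕ → ℝ := fun N => ∑ k ∈ Finset.range N, α k with hS
  have hbd : ∀ k, K + m ≤ k →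
      f i (x k) ≤ (f i (x (K + m)) + c / 2 * S (K + m)) + -(c / 2 * S k) := by
    intro k hk
    induction k, hk using Nat.le_induction with
    | base => linarith
    | succ k hk ih =>
      have h1 := hdec k hk
      have h2 : S (k + 1) = S k + α k := Finset.sum_range_succ _ _
      rw [h2]
      linarith
  refine tendsto_atBot_mono' atTop (eventually_atTop.2 ⟨K + m, hbd⟩) ?_
  exact tendsto_atBot_add_const_left _ _
    (tendsto_neg_atTop_atBot.comp (hαsum.const_mul_atTop (by positivity)))
end

section
/- Let f_1,…,f_m : ℝⁿ → ℝ be differentiable with L-Lipschitz gradients. Let (x_k) ⊂ ℝⁿ, positive step sizes (α_k) with α_k → 0 and Σ_k α_k = ∞, indices τ(i,k) with k − m ≤ τ(i,k) ≤ k, stale gradients ĝ_{i,k} = ∇f_i(x_{τ(i,k)}) all nonzero, and V̂_k the minimum-norm element (assumed to exist) of {V : ⟨ĝ_{i,k}, V⟩ ≤ −‖ĝ_{i,k}‖ for all i}, with x_{k+1} = x_k + α_k·V̂_k/‖V̂_k‖ for all k. Then at least one of the following holds: (i) there is a subsequence (x_{k_j}) along which min_{i=1,…,m} ‖∇f_i(x_{k_j})‖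 → 0; or (ii) there is a subsequence (x_{k_j}) along which the central descent directions diverge, in the sense that for every R > 0, for all sufficiently large j the set {V : ‖V‖ ≤ R and ⟨∇f_i(x_{k_j}), V⟩ ≤ −‖∇f_i(x_{k_j})‖ for all i} is empty; or (iii) f_i(x_k) → −∞ as k → ∞ for every i = 1,…,m. -/
open RealInnerProductSpace Filter Topology

lemma icd_descent {E : Type*} [NormedAddCommGroup E] [InnerProductSpace ℝ E] [CompleteSpace E]
    (f : E → ℝ) (L : ℝ) (hL : 0 ≤ L) (hdiff : Differentiable ℝ f)
    (hlip : ∀ x y : E, ‖gradient f x - gradient f y‖ ≤ L * ‖x - y‖) (x y : E) :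
    f y ≤ f x + inner ℝ (gradient f x) (y - x) + L * ‖y - x‖ * ‖y - x‖ := by
  have h := (convex_closedBall x ‖y - x‖).norm_image_sub_le_of_norm_hasFDerivWithin_le'
    (f := f) (f' := fun z => InnerProductSpace.toDual ℝ E (gradient f z))
    (φ := InnerProductSpace.toDual ℝ E (gradient f x)) (C := L * ‖y - x‖) (x := x) (y := y)
    (fun z _ => (hdiff z).hasGradientAt.hasFDerivAt.hasFDerivWithinAt)
    (fun z hz => by
      rw [← map_sub, LinearIsometryEquiv.norm_map]
      refine (hlip z x).trans ?_
      have : ‖z - x‖ ≤ ‖y - x‖ := by simpa [dist_eq_norm] using hz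
      gcongr)
    (by simp) (by simp [dist_eq_norm])
  rw [InnerProductSpace.toDual_apply_apply, Real.norm_eq_abs] at h
  have := (abs_le.1 h).2
  linarith

lemma icd_drift {E : Type*} [NormedAddCommGroup E] (x : ℕ → E) (η : ℝ) (K : ℕ)
    (h : ∀ k, K ≤ k → ‖x (k + 1) - x k‖ ≤ η) (a : ℕ) (ha : K ≤ a) (d : ℕ) :
    ‖x (a + d) - x a‖ ≤ d * η := by
  induction d with
  | zero => simp
  | succ d ih =>
    have h1 := h (a + d) (by omega)
    have h2 := norm_add_le (x (a + d + 1) - x (a + d)) (x (a + d) - x a)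
    rw [sub_add_sub_cancel] at h2
    rw [← add_assoc]
    push_cast
    linarith

/-- Global guarantee of the incremental central descent method (Theorem 3.4): with
vanishing, non-summable step sizes and `V̂_k` the minimum-norm element of the stale
feasible set, either (i) some subsequence has `min_i ‖∇f_i(x_{k_j})‖ → 0`, or (ii) some
subsequence has diverging central descent directions (for every radius `R`, the feasible
set intersected with the ball of radius `R` is eventually empty), or (iii) all objective
values tend to `-∞`. -/
theorem incremental_central_descent_global (n m : ℕ) (hm : 0 < m)
    (f : Fin m → EuclideanSpace ℝ (Fin n) → ℝ)
    (L : ℝ) (hL : 0 ≤ L)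
    (hdiff : ∀ i, Differentiable ℝ (f i))
    (hlip : ∀ i, ∀ x y : EuclideanSpace ℝ (Fin n),
      ‖gradient (f i) x - gradient (f i) y‖ ≤ L * ‖x - y‖)
    (x : ℕ → EuclideanSpace ℝ (Fin n))
    (α : ℕ → ℝ) (hα : ∀ k, 0 < α k)
    (hα0 : Tendsto α atTop (𝓝 0))
    (hαsum : Tendsto (fun N => ∑ k ∈ Finset.range N, α k) atTop atTop)
    (τ : Fin m → ℕ → ℕ)
    (hτ : ∀ i k, k - m ≤ τ i k ∧ τ i k ≤ k)
    (hgnz : ∀ i k, gradient (f i) (x (τ i k)) ≠ 0)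
    (V : ℕ → EuclideanSpace ℝ (Fin n))
    (hVmem : ∀ k i, ⟪gradient (f i) (x (τ i k)), V k⟫ ≤ -‖gradient (f i) (x (τ i k))‖)
    (hVmin : ∀ k, ∀ w : EuclideanSpace ℝ (Fin n),
      (∀ i, ⟪gradient (f i) (x (τ i k)), w⟫ ≤ -‖gradient (f i) (x (τ i k))‖) →
      ‖V k‖ ≤ ‖w‖)
    (hupd : ∀ k, x (k + 1) = x k + α k • ‖V k‖⁻¹ • V k) :
    (∃ φ : ℕ → ℕ, StrictMono φ ∧
       Tendsto (fun j => Finset.univ.inf' ⟨⟨0, hm⟩, Finset.mem_univ _⟩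
         (fun i => ‖gradient (f i) (x (φ j))‖)) atTop (𝓝 0)) ∨
    (∃ φ : ℕ → ℕ, StrictMono φ ∧
       ∀ R : ℝ, 0 < R → ∀ᶠ j in atTop,
         {W : EuclideanSpace ℝ (Fin n) | ‖W‖ ≤ R ∧
           ∀ i, ⟪gradient (f i) (x (φ j)), W⟫ ≤ -‖gradient (f i) (x (φ j))‖} = ∅) ∨
    (∀ i, Tendsto (fun k => f i (x k)) atTop atBot) := by
  by_cases h1 : ∃ ε : ℝ, 0 < ε ∧ ∀ᶠ k in atTop, ∀ i, ε ≤ ‖gradient (f i) (x k)‖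
  swap
  · left
    push Not at h1
    have h2 : ∀ j : ℕ, ∃ᶠ k in atTop, ∃ i, ‖gradient (f i) (x k)‖ < 1 / ((j : ℝ) + 1) := by
      intro j
      have := h1 (1 / ((j : ℝ) + 1)) (by positivity)
      simpa using this
    obtain ⟨φ, hφ, hφ2⟩ := extraction_forall_of_frequently h2
    refine ⟨φ, hφ, ?_⟩
    refine squeeze_zero (fun j => ?_) (fun j => ?_) tendsto_one_div_add_atTop_nhds_zero_nat
    · exact Finset.le_inf' _ _ (fun i _ => norm_nonneg _)
    · obtain ⟨i, hi⟩ := hφ2 j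
      exact (Finset.inf'_le _ (Finset.mem_univ i)).trans hi.le
  by_cases h2 : ∃ R : ℝ, 0 < R ∧ ∀ᶠ k in atTop, ∃ W : EuclideanSpace ℝ (Fin n), ‖W‖ ≤ R ∧
      ∀ i, ⟪gradient (f i) (x k), W⟫ ≤ -‖gradient (f i) (x k)‖
  swap
  · right; left
    have h3 : ∀ j : ℕ, ∃ᶠ k in atTop, ¬ ∃ W : EuclideanSpace ℝ (Fin n), ‖W‖ ≤ (j : ℝ) + 1 ∧
        ∀ i, ⟪gradient (f i) (x k), W⟫ ≤ -‖gradient (f i) (x k)‖ := by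
      intro j hj
      refine h2 ⟨(j : ℝ) + 1, by positivity, ?_⟩
      filter_upwards [hj] with k hk
      exact not_not.1 hk
    obtain ⟨φ, hφ, hφ2⟩ := extraction_forall_of_frequently h3
    refine ⟨φ, hφ, fun R _ => ?_⟩
    filter_upwards [eventually_ge_atTop ⌈R⌉₊] with j hj
    refine Set.eq_empty_iff_forall_notMem.2 fun W hW => hφ2 j ⟨W, ?_, hW.2⟩
    have := Nat.ceil_le.1 hj
    linarith [hW.1]
  right; right
  obtain ⟨ε, hε, h1⟩ := h1
  obtain ⟨R, hR, h2⟩ := h2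
  have hVpos : ∀ k, 0 < ‖V k‖ := by
    intro k
    rw [norm_pos_iff]
    intro h0
    have := hVmem k ⟨0, hm⟩
    rw [h0, inner_zero_right] at this
    have := norm_pos_iff.2 (hgnz ⟨0, hm⟩ k)
    linarith
  have hunit : ∀ k, ‖‖V k‖⁻¹ • V k‖ = 1 := by
    intro k
    rw [norm_smul, norm_inv, norm_norm, inv_mul_cancel₀ (hVpos k).ne']
  have hstep : ∀ k, ‖x (k + 1) - x k‖ = α k := by
    intro k
    rw [hupd, add_sub_cancel_left, norm_smul, hunit, mul_one, Real.norm_of_nonneg (hα k).le]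
  have hclose : ∀ η : ℝ, 0 < η → ∀ᶠ k in atTop, ∀ i,
      ‖gradient (f i) (x k) - gradient (f i) (x (τ i k))‖ ≤ η := by
    intro η hη
    have hη' : 0 < η / ((L + 1) * (m + 1)) := by positivity
    obtain ⟨K, hK⟩ := eventually_atTop.1 (hα0.eventually (eventually_le_nhds hη'))
    filter_upwards [eventually_ge_atTop (K + m)] with k hk i
    obtain ⟨ht1, ht2⟩ := hτ i k
    have hd := icd_drift x _ K (fun k hk => (hstep k).le.trans (hK k hk)) (τ i k) (by omega)
      (k - τ i k)
    rw [Nat.add_sub_cancel' ht2] at hd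
    have hkm : ((k - τ i k : ℕ) : ℝ) ≤ (m : ℝ) + 1 := by
      have : k - τ i k ≤ m + 1 := by omega
      exact_mod_cast this
    calc _ ≤ L * ‖x k - x (τ i k)‖ := hlip i _ _
      _ ≤ (L + 1) * (((m : ℝ) + 1) * (η / ((L + 1) * (m + 1)))) := by
        gcongr
        · linarith
        · exact hd.trans (by gcongr)
      _ = η := by field_simp
  obtain ⟨c, hc, hcR⟩ : ∃ c : ℝ, 0 < c ∧ c * (8 * R) = ε :=
    ⟨ε / (8 * R), by positivity, by field_simp⟩
  have hLα : ∀ᶠ k in atTop, L * α k ≤ c := by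
    have : Tendsto (fun k => L * α k) atTop (𝓝 0) := by simpa using hα0.const_mul L
    exact this.eventually (eventually_le_nhds hc)
  have hη0 : 0 < ε / (4 * (1 + R)) := by positivity
  have hdec : ∀ᶠ k in atTop, ∀ i, f i (x (k + 1)) ≤ f i (x k) - c * α k := by
    filter_upwards [h1, h2, hclose _ hη0, hclose c hc, hLα] with k hk1 ⟨W, hWR, hW⟩ hk3 hk4 hk5 i
    have hmul : ε / (4 * (1 + R)) * (1 + R) = ε / 4 := by field_simp
    have hηε : ε / (4 * (1 + R)) ≤ ε / 4 := by
      gcongr; linarith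
    have hghat : ∀ i, 3 / 4 * ε ≤ ‖gradient (f i) (x (τ i k))‖ := by
      intro i
      have := norm_sub_norm_le (gradient (f i) (x k)) (gradient (f i) (x (τ i k)))
      linarith [hk1 i, hk3 i]
    have hV2 : ‖V k‖ ≤ 2 * R := by
      have hw := hVmin k ((2 : ℝ) • W) (fun i => by
        rw [real_inner_smul_right]
        have e1 := norm_sub_norm_le (gradient (f i) (x (τ i k))) (gradient (f i) (x k))
        rw [norm_sub_rev] at e1
        have e2 := (abs_le.1 (abs_real_inner_le_norm
          (gradient (f i) (x k) - gradient (f i) (x (τ i k))) W)).1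
        rw [inner_sub_left] at e2
        have e3 : ‖gradient (f i) (x k) - gradient (f i) (x (τ i k))‖ * ‖W‖ ≤
          ε / (4 * (1 + R)) * R := by
          gcongr
          exact hk3 i
        linarith [hk3 i, hW i, hghat i])
      rw [norm_smul, Real.norm_of_nonneg (by norm_num)] at hw
      linarith
    have hd := icd_descent (f i) L hL (hdiff i) (hlip i) (x k) (x (k + 1))
    rw [hstep] at hd
    have hx : x (k + 1) - x k = α k • ‖V k‖⁻¹ • V k := by rw [hupd, add_sub_cancel_left]
    rw [hx, real_inner_smul_right] at hd
    have e1 := (abs_le.1 (abs_real_inner_le_norm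
      (gradient (f i) (x k) - gradient (f i) (x (τ i k))) (‖V k‖⁻¹ • V k))).2
    rw [hunit, mul_one, inner_sub_left] at e1
    have e2 : ⟪gradient (f i) (x (τ i k)), ‖V k‖⁻¹ • V k⟫ ≤ -(3 * c) := by
      rw [real_inner_smul_right, inv_mul_le_iff₀ (hVpos k)]
      have := mul_le_mul_of_nonneg_right hV2 hc.le
      linarith [hVmem k i, hghat i]
    have e3 : ⟪gradient (f i) (x k), ‖V k‖⁻¹ • V k⟫ ≤ -(2 * c) := by
      linarith [hk4 i]
    have e4 := mul_le_mul_of_nonneg_left e3 (hα k).le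
    have e5 := mul_le_mul_of_nonneg_right hk5 (hα k).le
    linarith
  obtain ⟨K, hK⟩ := eventually_atTop.1 hdec
  intro i
  have hbound : ∀ k, K ≤ k → f i (x k) ≤
      (f i (x K) + c * ∑ j ∈ Finset.range K, α j) - c * ∑ j ∈ Finset.range k, α j := by
    intro k hk
    induction k, hk using Nat.le_induction with
    | base => linarith
    | succ k hk ih =>
      rw [Finset.sum_range_succ]
      linarith [hK k hk i]
  refine tendsto_atBot_mono' atTop (eventually_atTop.2 ⟨K, hbound⟩) ?_
  simp only [sub_eq_add_neg]
  exact tendsto_atBot_add_const_left _ _ (tendsto_neg_atTop_atBot.comp (hαsum.const_mul_atTop hc))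
end

section
/- Let f : ℝⁿ → ℝ be differentiable with L-Lipschitz gradient (L > 0), let x ∈ ℝⁿ with g = ∇f(x) ≠ 0, let β ∈ (0,1), and let V̂ ∈ ℝⁿ satisfy ⟨g, V̂⟩ ≤ −‖g‖ (so V̂ ≠ 0). Let l* be the smallest nonnegative integer l such that f(x + (1/2)^l·V̂/‖V̂‖) − f(x) ≤ β·(1/2)^l·⟨g, V̂⟩/‖V̂‖ (such l exists), and set α = (1/2)^{l*}. Then α ≥ min{ (1−β)·‖g‖ / (2L·‖V̂‖), 1 }. -/
open RealInnerProductSpace Filter Topology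

/-- Lower bound for the Armijo backtracking step size along the normalized direction
`V̂/‖V̂‖`: the accepted step `α = (1/2)^{l*}` satisfies
`α ≥ min{(1-β)‖g‖/(2L‖V̂‖), 1}`. -/
theorem armijo_step_lower_bound (n : ℕ)
    (f : EuclideanSpace ℝ (Fin n) → ℝ)
    (hdiff : Differentiable ℝ f)
    (L : ℝ) (hL : 0 < L)
    (hlip : ∀ x y : EuclideanSpace ℝ (Fin n),
      ‖gradient f x - gradient f y‖ ≤ L * ‖x - y‖)
    (x : EuclideanSpace ℝ (Fin n)) (hg : gradient f x ≠ 0)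
    (β : ℝ) (hβ₀ : 0 < β) (hβ₁ : β < 1)
    (V : EuclideanSpace ℝ (Fin n))
    (hfeas : ⟪gradient f x, V⟫ ≤ -‖gradient f x‖)
    (l : ℕ)
    (hl : f (x + ((1 / 2 : ℝ)) ^ l • ‖V‖⁻¹ • V) - f x ≤
      β * (1 / 2 : ℝ) ^ l * (⟪gradient f x, V⟫ / ‖V‖))
    (hlmin : ∀ l' : ℕ, l' < l →
      ¬ (f (x + ((1 / 2 : ℝ)) ^ l' • ‖V‖⁻¹ • V) - f x ≤
        β * (1 / 2 : ℝ) ^ l' * (⟪gradient f x, V⟫ / ‖V‖))) :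
    min ((1 - β) * ‖gradient f x‖ / (2 * L * ‖V‖)) 1 ≤ (1 / 2 : ℝ) ^ l := by
  have hgpos : 0 < ‖gradient f x‖ := norm_pos_iff.mpr hg
  have hV : V ≠ 0 := by
    rintro rfl
    rw [inner_zero_right] at hfeas
    linarith
  have hVpos : 0 < ‖V‖ := norm_pos_iff.mpr hV
  rcases l with _ | k
  · simp
  refine (min_le_left _ _).trans ?_
  have hk := hlmin k (Nat.lt_succ_self k)
  rw [not_le] at hk
  rw [pow_succ]
  have htpos : (0 : ℝ) < (1 / 2 : ℝ) ^ k := by positivity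
  generalize (1 / 2 : ℝ) ^ k = t at hk htpos ⊢
  set u := ‖V‖⁻¹ • V with hu
  have hun : ‖u‖ = 1 := by
    rw [hu, norm_smul, norm_inv, norm_norm, inv_mul_cancel₀ hVpos.ne']
  have hc : ⟪gradient f x, V⟫ / ‖V‖ = ⟪gradient f x, u⟫ := by
    rw [hu, inner_smul_right, div_eq_inv_mul]
  have hder : ∀ s : ℝ, HasDerivAt (fun s : ℝ => f (x + s • u))
      ⟪gradient f (x + s • u), u⟫ s := by
    intro s
    have h1 : HasDerivAt (fun s : ℝ => x + s • u) u s := by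
      simpa using ((hasDerivAt_id s).smul_const u).const_add x
    have h2 := (hdiff (x + s • u)).hasGradientAt.hasFDerivAt
    have h3 := h2.comp_hasDerivAt s h1
    exact h3
  obtain ⟨s, hs, hsd⟩ := exists_hasDerivAt_eq_slope (fun s : ℝ => f (x + s • u)) _ htpos
    (fun s _ => (hder s).continuousAt.continuousWithinAt) (fun s _ => hder s)
  have hmv : f (x + t • u) - f x = t * ⟪gradient f (x + s • u), u⟫ := by
    rw [hsd]
    simp only [zero_smul, add_zero, sub_zero]
    field_simp
  have hb : ⟪gradient f (x + s • u), u⟫ ≤ ⟪gradient f x, u⟫ + L * t := by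
    have h1 := real_inner_le_norm (gradient f (x + s • u) - gradient f x) u
    have h2 := hlip (x + s • u) x
    rw [add_sub_cancel_left, norm_smul, hun, Real.norm_eq_abs, abs_of_pos hs.1] at h2
    rw [inner_sub_left, hun] at h1
    have h3 : L * s ≤ L * t := mul_le_mul_of_nonneg_left hs.2.le hL.le
    linarith
  rw [hmv, hc] at hk
  have hk2 : β * ⟪gradient f x, u⟫ < ⟪gradient f (x + s • u), u⟫ := by
    refine lt_of_mul_lt_mul_left ?_ htpos.le
    linarith
  have hcu : ⟪gradient f x, u⟫ * ‖V‖ ≤ -‖gradient f x‖ := by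
    rw [← hc, div_mul_cancel₀ _ hVpos.ne']
    exact hfeas
  have h4 : -((1 - β) * ⟪gradient f x, u⟫) ≤ L * t := by linarith
  have h5 := mul_le_mul_of_nonneg_right h4 hVpos.le
  have h6 := mul_le_mul_of_nonneg_left hcu (sub_pos.mpr hβ₁).le
  rw [div_le_iff₀ (by positivity)]
  linarith
end

section
/- Let f_1,…,f_m : ℝⁿ → ℝ be differentiable with L-Lipschitz gradients (L > 0) and let β ∈ (0,1). Let (x_k) ⊂ ℝⁿ, indices j(k) ∈ {1,…,m}, positive step sizes (α_k), and nonzero vectors V̂_k satisfy, for every k: (a) x_{k+1} = x_k + α_k·V̂_k/‖V̂_k‖; (b) the Armijo condition f_{j(k)}(x_{k+1}) − f_{j(k)}(x_k) ≤ β·α_k·⟨∇f_{j(k)}(x_k), V̂_k⟩/‖V̂_k‖; (c) the central-direction feasibility ⟨∇f_{j(k)}(x_k), V̂_k⟩ ≤ −‖∇f_{j(k)}(x_k)‖; (d) the step lower bound α_k ≥ min{(1−β)/(2L), 1}·‖∇f_{j(k)}(x_k)‖/‖V̂_k‖; and (e) the linkage f_{j(k+1)}(x_{k+1}) ≤ f_{j(k)}(x_{k+1}).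 Then for every k: f_{j(k)}(x_k) − f_{j(k+1)}(x_{k+1}) ≥ min{ β(1−β)/(2L), β } · ( min_{t=1,…,m} ‖∇f_t(x_k)‖ )² / ‖V̂_k‖². -/
open RealInnerProductSpace Filter Topology

/-- Per-iteration decrease of the incremental central descent method with inexact
(Armijo) line search:
`f_{j(k)}(x_k) - f_{j(k+1)}(x_{k+1}) ≥ min{β(1-β)/(2L), β} (min_t ‖∇f_t(x_k)‖)² / ‖V̂_k‖²`. -/
theorem incremental_armijo_iteration_decrease (n m : ℕ)
    (f : Fin m → EuclideanSpace ℝ (Fin n) → ℝ)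
    (L : ℝ) (hL : 0 < L)
    (hdiff : ∀ i, Differentiable ℝ (f i))
    (hlip : ∀ i, ∀ x y : EuclideanSpace ℝ (Fin n),
      ‖gradient (f i) x - gradient (f i) y‖ ≤ L * ‖x - y‖)
    (β : ℝ) (hβ₀ : 0 < β) (hβ₁ : β < 1)
    (x : ℕ → EuclideanSpace ℝ (Fin n)) (j : ℕ → Fin m)
    (α : ℕ → ℝ) (hα : ∀ k, 0 < α k)
    (V : ℕ → EuclideanSpace ℝ (Fin n)) (hVnz : ∀ k, V k ≠ 0)
    (hupd : ∀ k, x (k + 1) = x k + α k • ‖V k‖⁻¹ • V k)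
    (harmijo : ∀ k, f (j k) (x (k + 1)) - f (j k) (x k) ≤
      β * α k * (⟪gradient (f (j k)) (x k), V k⟫ / ‖V k‖))
    (hfeas : ∀ k, ⟪gradient (f (j k)) (x k), V k⟫ ≤ -‖gradient (f (j k)) (x k)‖)
    (hstep : ∀ k, min ((1 - β) / (2 * L)) 1 * (‖gradient (f (j k)) (x k)‖ / ‖V k‖) ≤ α k)
    (hlink : ∀ k, f (j (k + 1)) (x (k + 1)) ≤ f (j k) (x (k + 1))) :
    ∀ k, f (j k) (x k) - f (j (k + 1)) (x (k + 1)) ≥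
      min (β * (1 - β) / (2 * L)) β *
        (Finset.univ.inf' ⟨j k, Finset.mem_univ _⟩
          (fun t => ‖gradient (f t) (x k)‖)) ^ 2 / ‖V k‖ ^ 2 := by
  intro k
  have hv : 0 < ‖V k‖ := norm_pos_iff.mpr (hVnz k)
  have hmin : min (β * (1 - β) / (2 * L)) β = β * min ((1 - β) / (2 * L)) 1 := by
    rw [mul_min_of_nonneg _ _ hβ₀.le, mul_one, mul_div_assoc]
  have hc : 0 ≤ min ((1 - β) / (2 * L)) 1 :=
    le_min (div_nonneg (by linarith) (by linarith)) zero_le_one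
  have hI0 : 0 ≤ Finset.univ.inf' ⟨j k, Finset.mem_univ _⟩
      (fun t => ‖gradient (f t) (x k)‖) :=
    Finset.le_inf' _ _ (fun t _ => norm_nonneg _)
  have hI : Finset.univ.inf' ⟨j k, Finset.mem_univ _⟩
      (fun t => ‖gradient (f t) (x k)‖) ≤ ‖gradient (f (j k)) (x k)‖ :=
    Finset.inf'_le (fun t => ‖gradient (f t) (x k)‖) (Finset.mem_univ (j k))
  rw [hmin]
  generalize Finset.univ.inf' ⟨j k, Finset.mem_univ _⟩
      (fun t => ‖gradient (f t) (x k)‖) = I at hI0 hI ⊢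
  have hs := hstep k
  have ha := harmijo k
  have hl := hlink k
  have hf : ⟪gradient (f (j k)) (x k), V k⟫ / ‖V k‖ ≤
      -(‖gradient (f (j k)) (x k)‖ / ‖V k‖) := by
    rw [← neg_div]
    exact div_le_div_of_nonneg_right (hfeas k) hv.le
  generalize min ((1 - β) / (2 * L)) 1 = c at hc hs ⊢
  have hq : 0 ≤ ‖gradient (f (j k)) (x k)‖ / ‖V k‖ := by positivity
  have h1 : I / ‖V k‖ ≤ ‖gradient (f (j k)) (x k)‖ / ‖V k‖ :=
    div_le_div_of_nonneg_right hI hv.le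
  have h0 : 0 ≤ I / ‖V k‖ := by positivity
  generalize ‖gradient (f (j k)) (x k)‖ / ‖V k‖ = q at *
  have h2 := mul_le_mul_of_nonneg_left hf (mul_nonneg hβ₀.le (hα k).le)
  have h3 : β * c * I ^ 2 / ‖V k‖ ^ 2 ≤ β * α k * q := by
    calc β * c * I ^ 2 / ‖V k‖ ^ 2 = β * c * (I / ‖V k‖) ^ 2 := by
          rw [div_pow, mul_div_assoc]
      _ ≤ β * c * q ^ 2 := by gcongr
      _ = β * (c * q) * q := by ring
      _ ≤ β * α k * q := by gcongr
  linarith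
end

section
/- Let f_1,…,f_m : ℝⁿ → ℝ be differentiable with L-Lipschitz gradients (L > 0), all bounded from below by a common constant f^min, and let β ∈ (0,1). Let (x_k)_{k≥0} ⊂ ℝⁿ, indices j(k) ∈ {1,…,m} with j(0) = 1, positive step sizes (α_k), and nonzero vectors V̂_k satisfy, for every k: (a) x_{k+1} = x_k + α_k·V̂_k/‖V̂_k‖; (b) the Armijo condition f_{j(k)}(x_{k+1}) − f_{j(k)}(x_k) ≤ β·α_k·⟨∇f_{j(k)}(x_k), V̂_k⟩/‖V̂_k‖; (c) the central-direction feasibility ⟨∇f_{j(k)}(x_k), V̂_k⟩ ≤ −‖∇f_{j(k)}(x_k)‖; (d) the step lower bound α_k ≥ min{(1−β)/(2L), 1}·‖∇f_{j(k)}(x_k)‖/‖V̂_k‖; and (e) the linkage f_{j(k+1)}(x_{k+1}) ≤ f_{j(k)}(x_{k+1}). Then for every k ≥ 1: min_{0 ≤ l ≤ k−1} ( min_{t=1,…,m} ‖∇f_t(x_l)‖ / ‖V̂_l‖ ) ≤ sqrt( (1/k) · ( f_1(x_0) − f^min ) / min{ β(1−β)/(2L), β } ). -/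
open RealInnerProductSpace Filter Topology

/-- Global `1/√k` convergence of the measure of criticality for the incremental central
descent method with inexact (Armijo) line search (Theorem 3.6):
`min_{0 ≤ l ≤ k-1} min_t ‖∇f_t(x_l)‖/‖V̂_l‖ ≤ √( (f_1(x_0) - f^min) / (k·min{β(1-β)/(2L), β}) )`. -/
theorem incremental_armijo_rate (n m : ℕ) (hm : 0 < m)
    (f : Fin m → EuclideanSpace ℝ (Fin n) → ℝ)
    (L : ℝ) (hL : 0 < L)
    (hdiff : ∀ i, Differentiable ℝ (f i))
    (hlip : ∀ i, ∀ x y : EuclideanSpace ℝ (Fin n),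
      ‖gradient (f i) x - gradient (f i) y‖ ≤ L * ‖x - y‖)
    (fmin : ℝ) (hbdd : ∀ i, ∀ y : EuclideanSpace ℝ (Fin n), fmin ≤ f i y)
    (β : ℝ) (hβ₀ : 0 < β) (hβ₁ : β < 1)
    (x : ℕ → EuclideanSpace ℝ (Fin n)) (j : ℕ → Fin m)
    (hj0 : j 0 = ⟨0, hm⟩)
    (α : ℕ → ℝ) (hα : ∀ k, 0 < α k)
    (V : ℕ → EuclideanSpace ℝ (Fin n)) (hVnz : ∀ k, V k ≠ 0)
    (hupd : ∀ k, x (k + 1) = x k + α k • ‖V k‖⁻¹ • V k)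
    (harmijo : ∀ k, f (j k) (x (k + 1)) - f (j k) (x k) ≤
      β * α k * (⟪gradient (f (j k)) (x k), V k⟫ / ‖V k‖))
    (hfeas : ∀ k, ⟪gradient (f (j k)) (x k), V k⟫ ≤ -‖gradient (f (j k)) (x k)‖)
    (hstep : ∀ k, min ((1 - β) / (2 * L)) 1 * (‖gradient (f (j k)) (x k)‖ / ‖V k‖) ≤ α k)
    (hlink : ∀ k, f (j (k + 1)) (x (k + 1)) ≤ f (j k) (x (k + 1))) :
    ∀ k : ℕ, ∀ hk : 1 ≤ k,
      (Finset.range k).inf' (Finset.nonempty_range_iff.mpr (Nat.one_le_iff_ne_zero.mp hk))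
        (fun l => (Finset.univ.inf' ⟨⟨0, hm⟩, Finset.mem_univ _⟩
          (fun t => ‖gradient (f t) (x l)‖)) / ‖V l‖) ≤
      Real.sqrt ((1 / (k : ℝ)) *
        ((f ⟨0, hm⟩ (x 0) - fmin) / min (β * (1 - β) / (2 * L)) β)) := by
  intro k hk
  set M := (Finset.range k).inf' (Finset.nonempty_range_iff.mpr (Nat.one_le_iff_ne_zero.mp hk))
        (fun l => (Finset.univ.inf' ⟨⟨0, hm⟩, Finset.mem_univ _⟩
          (fun t => ‖gradient (f t) (x l)‖)) / ‖V l‖) with hM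
  have hVpos : ∀ l, 0 < ‖V l‖ := fun l => norm_pos_iff.mpr (hVnz l)
  have hM0 : 0 ≤ M := by
    rw [hM]
    apply Finset.le_inf'
    intro l _
    apply div_nonneg _ (hVpos l).le
    apply Finset.le_inf'
    intro t _
    exact norm_nonneg _
  have hMr : ∀ l, l < k → M ≤ ‖gradient (f (j l)) (x l)‖ / ‖V l‖ := by
    intro l hl
    rw [hM]
    refine (Finset.inf'_le _ (Finset.mem_range.mpr hl)).trans ?_
    apply div_le_div_of_nonneg_right _ (hVpos l).le
    exact Finset.inf'_le (fun t => ‖gradient (f t) (x l)‖) (Finset.mem_univ (j l))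
  have hc : min (β * (1 - β) / (2 * L)) β = β * min ((1 - β) / (2 * L)) 1 := by
    rw [mul_min_of_nonneg _ _ hβ₀.le, mul_one, mul_div_assoc]
  have hcpos : 0 < min ((1 - β) / (2 * L)) 1 := by
    apply lt_min _ one_pos
    apply div_pos <;> linarith
  rw [hc]
  generalize min ((1 - β) / (2 * L)) 1 = c at *
  have hdec : ∀ l, f (j (l + 1)) (x (l + 1)) ≤ f (j l) (x l)
      - β * c * (‖gradient (f (j l)) (x l)‖ / ‖V l‖) ^ 2 := by
    intro l
    have h1 := harmijo l
    have h2 := hlink l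
    have h3 := hstep l
    have h4 : ⟪gradient (f (j l)) (x l), V l⟫ / ‖V l‖
        ≤ -(‖gradient (f (j l)) (x l)‖ / ‖V l‖) := by
      rw [← neg_div]
      exact div_le_div_of_nonneg_right (hfeas l) (hVpos l).le
    have h5 : 0 ≤ ‖gradient (f (j l)) (x l)‖ / ‖V l‖ := by positivity
    have h6 := mul_le_mul_of_nonneg_left h4 (mul_pos hβ₀ (hα l)).le
    have h7 := mul_le_mul_of_nonneg_left (mul_le_mul_of_nonneg_right h3 h5) hβ₀.le
    nlinarith
  have hsum : ∀ l, l ≤ k → f (j l) (x l) ≤ f (j 0) (x 0) - l * (β * c * M ^ 2) := by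
    intro l
    induction l with
    | zero => intro _; simp
    | succ l ih =>
      intro hl
      have h1 := ih (by omega)
      have h2 := hdec l
      have h3 := pow_le_pow_left₀ hM0 (hMr l (by omega)) 2
      have h4 := mul_le_mul_of_nonneg_left h3 (mul_pos hβ₀ hcpos).le
      push_cast
      linarith
  have hfin := hsum k le_rfl
  have hb := hbdd (j k) (x k)
  rw [hj0] at hfin
  have hkpos : (0 : ℝ) < k := by exact_mod_cast hk
  apply Real.le_sqrt_of_sq_le
  rw [one_div, inv_mul_eq_div, div_div, le_div_iff₀ (by positivity)]
  linarith
end
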